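/- Let G ↷ X be an expansive action with the topological Markov property. Let k ∈ ℕ and (x₁,…,x_k,x_{k+1}) ∈ X^{k+1} be such that (x₁,…,x_k) is an orbit IE-tuple and (x_k,x_{k+1}) is an asymptotic pair. Then (x₁,…,x_k,x_{k+1}) is an orbit IE-tuple. -/

import Mathlib

open Pointwise

/-- Supremum over `g ∈ K` of `ρ (g • x) (g • y)`. -/
noncomputable def supOf {G X : Type*} [SMul G X] (ρ : X → X → ℝ) (K : Set G) (x y : X) : ℝ :=
  ⨆ g : K, ρ ((g : G) • x) ((g : G) • y)

/-- `d_K(x,y) = sup_{g ∈ K} d(g x, g y)`. -/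
noncomputable def supD {G X : Type*} [SMul G X] [PseudoMetricSpace X] (K : Set G) (x y : X) : ℝ :=
  supOf dist K x y

/-- `B` is an `(ε,δ)`-memory set for `A`. -/
def IsMemorySet (G X : Type*) [SMul G X] [PseudoMetricSpace X] (ε δ : ℝ)
    (A B : Finset G) : Prop :=
  (A : Set G) ⊆ (B : Set G) ∧
    ∀ x y : X, supD ((B : Set G) \ (A : Set G)) x y ≤ δ →
      ∃ z : X, supD (B : Set G) x z ≤ ε ∧ supD (Set.univ \ (A : Set G)) y z ≤ ε

/-- The topological Markov property. -/
def TMP (G X : Type*) [SMul G X] [PseudoMetricSpace X] : Prop :=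
  ∀ ε > (0 : ℝ), ∃ δ > (0 : ℝ), ∀ A : Finset G, ∃ B : Finset G, IsMemorySet G X ε δ A B

/-- The strong topological Markov property. -/
def StrongTMP (G X : Type*) [Group G] [DecidableEq G] [MulAction G X]
    [PseudoMetricSpace X] : Prop :=
  ∀ ε > (0 : ℝ), ∃ δ > (0 : ℝ), ∃ F : Finset G, (1 : G) ∈ F ∧
    ∀ A : Finset G, IsMemorySet G X ε δ A (F * A)

/-- `V` is `B`-separated. -/
def Separated {G : Type*} [Mul G] (B V : Set G) : Prop :=
  ∀ v₁ ∈ V, ∀ v₂ ∈ V, v₁ ≠ v₂ → Disjoint (B * ({v₁} : Set G)) (B * ({v₂} : Set G))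

/-- `B` is a uniform `(ε,δ)`-memory set for `A`. -/
def IsUniformMemorySet (G X : Type*) [Group G] [MulAction G X] [PseudoMetricSpace X]
    (ε δ : ℝ) (A B : Finset G) : Prop :=
  IsMemorySet G X ε δ A B ∧
    ∀ V : Finset G, Separated (B : Set G) (V : Set G) →
      ∀ (xv : G → X) (y : X),
        (∀ v ∈ V, supD (((B : Set G) \ (A : Set G)) * ({v} : Set G)) (xv v) y ≤ δ) →
        ∃ z : X, (∀ v ∈ V, supD ((B : Set G) * ({v} : Set G)) z (xv v) ≤ ε) ∧
          supD (Set.univ \ ((A : Set G) * (V : Set G))) z y ≤ ε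

/-- The uniform topological Markov property. -/
def UniformTMP (G X : Type*) [Group G] [MulAction G X] [PseudoMetricSpace X] : Prop :=
  ∀ ε > (0 : ℝ), ∃ δ > (0 : ℝ), ∀ A : Finset G, ∃ B : Finset G,
    IsUniformMemorySet G X ε δ A B

/-- The uniform strong topological Markov property. -/
def UniformStrongTMP (G X : Type*) [Group G] [DecidableEq G] [MulAction G X]
    [PseudoMetricSpace X] : Prop :=
  ∀ ε > (0 : ℝ), ∃ δ > (0 : ℝ), ∃ F : Finset G, (1 : G) ∈ F ∧
    ∀ A : Finset G, IsUniformMemorySet G X ε δ A (F * A)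

/-- Expansivity of the action. -/
def Expansive (G X : Type*) [SMul G X] [PseudoMetricSpace X] : Prop :=
  ∃ c > (0 : ℝ), ∀ x y : X, x ≠ y → ∃ g : G, dist (g • x) (g • y) > c

/-- `(x,y)` is an asymptotic pair. -/
def Asymptotic (G : Type*) {X : Type*} [SMul G X] [PseudoMetricSpace X] (x y : X) : Prop :=
  ∀ ε > (0 : ℝ), ∃ F : Finset G, ∀ g ∉ F, dist (g • x) (g • y) ≤ ε

/-- `(S,δ)` pseudo-orbit. -/
def IsPseudoOrbit {G X : Type*} [Mul G] [SMul G X] [PseudoMetricSpace X]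
    (S : Finset G) (δ : ℝ) (w : G → X) : Prop :=
  ∀ s ∈ S, ∀ g : G, dist (s • w g) (w (s * g)) < δ

/-- `w` is `ε`-traced by `x`. -/
def Traces {G X : Type*} [SMul G X] [PseudoMetricSpace X] (ε : ℝ) (x : X) (w : G → X) : Prop :=
  ∀ g : G, dist (g • x) (w g) ≤ ε

/-- Pseudo-orbit tracing property. -/
def POTP (G X : Type*) [Mul G] [SMul G X] [PseudoMetricSpace X] : Prop :=
  ∀ ε > (0 : ℝ), ∃ δ > (0 : ℝ), ∃ S : Finset G, ∀ w : G → X,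
    IsPseudoOrbit S δ w → ∃ x : X, Traces ε x w

/-- `J` is an independence set for the tuple `U`. -/
def IndepSet {G X : Type*} [SMul G X] {n : ℕ} (U : Fin n → Set X) (J : Set G) : Prop :=
  ∀ I : Finset G, (I : Set G) ⊆ J → I.Nonempty → ∀ φ : G → Fin n,
    (⋂ s ∈ I, (fun x : X => s • x) ⁻¹' U (φ s)).Nonempty

/-- The tuple `U` has positive independence density. -/
def PosIndepDensity (G : Type*) {X : Type*} [SMul G X] {n : ℕ} (U : Fin n → Set X) : Prop :=
  ∃ q > (0 : ℝ), ∀ F : Finset G, ∃ J : Finset G, J ⊆ F ∧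
    q * (F.card : ℝ) ≤ (J.card : ℝ) ∧ IndepSet U (J : Set G)

/-- Orbit IE-tuple. -/
def IETuple (G : Type*) {X : Type*} [SMul G X] [TopologicalSpace X] {n : ℕ}
    (x : Fin n → X) : Prop :=
  ∀ U : Fin n → Set X, (∀ i, IsOpen (U i)) → (∀ i, x i ∈ U i) → PosIndepDensity G U

/-- Minimality of the action. -/
def MinimalAction (G X : Type*) [SMul G X] [TopologicalSpace X] : Prop :=
  ∀ Y : Set X, IsClosed Y → (∀ g : G, ∀ y ∈ Y, g • y ∈ Y) → Y.Nonempty → Y = Set.univ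

/-- Følner sequence. -/
def FolnerSeq (G : Type*) [Group G] [DecidableEq G] (F : ℕ → Finset G) : Prop :=
  (∀ n, (F n).Nonempty) ∧
    ∀ K : Finset G, Filter.Tendsto
      (fun n => ((symmDiff (K * F n) (F n)).card : ℝ) / ((F n).card : ℝ))
      Filter.atTop (nhds 0)

section Helpers

variable {G X : Type*} [Group G] [MetricSpace X] [CompactSpace X] [MulAction G X]

theorem supD_le_of {K : Set G} {x y : X} {δ : ℝ} (hδ : 0 ≤ δ)
    (h : ∀ g ∈ K, dist (g • x) (g • y) ≤ δ) : supD K x y ≤ δ := by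
  unfold supD supOf
  exact Real.iSup_le (fun g => h g g.2) hδ

theorem le_of_supD {K : Set G} {x y : X} {δ : ℝ} (h : supD K x y ≤ δ) :
    ∀ g ∈ K, dist (g • x) (g • y) ≤ δ := by
  intro g hg
  unfold supD supOf at h
  refine le_trans ?_ h
  refine le_ciSup (f := fun g : K => dist ((g : G) • x) ((g : G) • y)) ?_ ⟨g, hg⟩
  refine ⟨Metric.diam (Set.univ : Set X), ?_⟩
  rintro _ ⟨k, rfl⟩
  exact Metric.dist_le_diam_of_mem isCompact_univ.isBounded (Set.mem_univ _) (Set.mem_univ _)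

theorem expansive_unif (hcont : ∀ g : G, Continuous fun x : X => g • x) {c : ℝ}
    (hc : ∀ x y : X, x ≠ y → ∃ g : G, dist (g • x) (g • y) > c) {η : ℝ} (hη : 0 < η) :
    ∃ F : Finset G, (1 : G) ∈ F ∧
      ∀ x y : X, (∀ h ∈ F, dist (h • x) (h • y) ≤ c) → dist x y ≤ η := by
  classical
  have hK : IsCompact {p : X × X | η ≤ dist p.1 p.2} :=
    (isClosed_le continuous_const (continuous_fst.dist continuous_snd)).isCompact
  obtain ⟨F, hF⟩ := hK.elim_finite_subcover
    (fun g : G => {p : X × X | c < dist (g • p.1) (g • p.2)})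
    (fun g => isOpen_lt continuous_const
      (((hcont g).comp continuous_fst).dist ((hcont g).comp continuous_snd)))
    (by
      rintro ⟨a, b⟩ hab
      have hab' : η ≤ dist a b := hab
      have hne : a ≠ b := by
        rintro rfl
        rw [dist_self] at hab'
        linarith
      obtain ⟨g, hg⟩ := hc a b hne
      exact Set.mem_iUnion.2 ⟨g, hg⟩)
  refine ⟨insert 1 F, Finset.mem_insert_self _ _, fun x y h => ?_⟩
  by_contra hlt
  push Not at hlt
  have hmem := hF (show (x, y) ∈ {p : X × X | η ≤ dist p.1 p.2} from hlt.le)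
  simp only [Set.mem_iUnion] at hmem
  obtain ⟨g, hgF, hg⟩ := hmem
  have h1 := h g (Finset.mem_insert_of_mem hgF)
  have h2 : c < dist (g • x) (g • y) := hg
  linarith

theorem thinning (B : Finset G) (h1 : (1 : G) ∈ B) :
    ∃ N : ℕ, 0 < N ∧ ∀ J : Finset G, ∃ V : Finset G, V ⊆ J ∧ J.card ≤ N * V.card ∧
      ∀ v₁ ∈ V, ∀ v₂ ∈ V, ∀ b₁ ∈ B, ∀ b₂ ∈ B, b₁ * v₁ = b₂ * v₂ → v₁ = v₂ := by
  classical
  refine ⟨(B⁻¹ * B).card, Finset.card_pos.2 ⟨1⁻¹ * 1,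
    Finset.mul_mem_mul (Finset.inv_mem_inv h1) h1⟩, fun J => ?_⟩
  obtain ⟨P, hP⟩ : ∃ P : Finset G → Prop, ∀ V, P V ↔ ∀ v₁ ∈ V, ∀ v₂ ∈ V, ∀ b₁ ∈ B, ∀ b₂ ∈ B,
      b₁ * v₁ = b₂ * v₂ → v₁ = v₂ := ⟨_, fun _ => Iff.rfl⟩
  obtain ⟨V, hV, hmax⟩ := Finset.exists_max_image
    (J.powerset.filter P) Finset.card ⟨∅, by simp [hP]⟩
  rw [Finset.mem_filter, Finset.mem_powerset, hP] at hV
  refine ⟨V, hV.1, ?_, hV.2⟩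
  have hsub : J ⊆ (B⁻¹ * B) * V := by
    intro t ht
    by_contra hnot
    have key : ∀ v ∈ V, ∀ b₁ ∈ B, ∀ b₂ ∈ B, b₁ * t ≠ b₂ * v := by
      intro v hv b₁ hb₁ b₂ hb₂ heq
      apply hnot
      have : t = (b₁⁻¹ * b₂) * v := by
        rw [mul_assoc, ← heq, inv_mul_cancel_left]
      rw [this]
      exact Finset.mul_mem_mul (Finset.mul_mem_mul (Finset.inv_mem_inv hb₁) hb₂) hv
    have htV : t ∉ V := fun htV => key t htV 1 h1 1 h1 rfl
    have := hmax (insert t V) (by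
      rw [Finset.mem_filter, Finset.mem_powerset, hP]
      refine ⟨Finset.insert_subset ht hV.1, ?_⟩
      intro v₁ hv₁ v₂ hv₂ b₁ hb₁ b₂ hb₂ heq
      rw [Finset.mem_insert] at hv₁ hv₂
      rcases hv₁ with rfl | hv₁ <;> rcases hv₂ with rfl | hv₂
      · rfl
      · exact absurd heq (key _ hv₂ _ hb₁ _ hb₂)
      · exact absurd heq.symm (key _ hv₁ _ hb₂ _ hb₁)
      · exact hV.2 _ hv₁ _ hv₂ _ hb₁ _ hb₂ heq)
    rw [Finset.card_insert_of_notMem htV] at this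
    omega
  exact (Finset.card_le_card hsub).trans Finset.card_mul_le

/-- An expansive action with the TMP has (a form of) the uniform TMP. -/
theorem uniform_tmp (hcont : ∀ g : G, Continuous fun x : X => g • x)
    {c : ℝ} (hc : ∀ x y : X, x ≠ y → ∃ g : G, dist (g • x) (g • y) > c)
    (htmp : TMP G X) {ε : ℝ} (hε : 0 < ε) (hεc : 4 * ε ≤ c) :
    ∃ δ > 0, ∀ A : Finset G, ∃ B : Finset G, A ⊆ B ∧
      ∀ V : Finset G,
        (∀ v₁ ∈ V, ∀ v₂ ∈ V, ∀ b₁ ∈ B, ∀ b₂ ∈ B, b₁ * v₁ = b₂ * v₂ → v₁ = v₂) →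
        ∀ (xv : G → X) (y : X),
          (∀ v ∈ V, ∀ b ∈ B, b ∉ A → dist ((b * v) • xv v) ((b * v) • y) ≤ δ) →
          ∃ z : X, (∀ v ∈ V, ∀ b ∈ B, dist ((b * v) • z) ((b * v) • xv v) ≤ ε) ∧
            ∀ g : G, (∀ v ∈ V, ∀ b ∈ B, g ≠ b * v) → dist (g • z) (g • y) ≤ ε := by
  classical
  obtain ⟨δ₀, hδ₀, hmem⟩ := htmp ε hε
  obtain ⟨F₁, h1F₁, hF₁⟩ := expansive_unif hcont hc (half_pos hε)
  obtain ⟨F₂, h1F₂, hF₂⟩ := expansive_unif hcont hc (half_pos hδ₀)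
  refine ⟨min (δ₀ / 2) (ε / 2), lt_min (half_pos hδ₀) (half_pos hε), fun A => ?_⟩
  obtain ⟨B₀, hAB₀, hB₀⟩ := hmem A
  have hAB₀ : A ⊆ B₀ := by exact_mod_cast hAB₀
  set δ := min (δ₀ / 2) (ε / 2) with hδdef
  have hδ1 : δ ≤ δ₀ / 2 := min_le_left _ _
  have hδ2 : δ ≤ ε / 2 := min_le_right _ _
  have hδpos : 0 < δ := lt_min (half_pos hδ₀) (half_pos hε)
  set B := B₀ ∪ (F₁ * (F₁⁻¹ * A) ∪ F₂ * B₀) with hB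
  have hB₀B : B₀ ⊆ B := Finset.subset_union_left
  have hF₁B : ∀ h ∈ F₁, ∀ f ∈ F₁, ∀ a ∈ A, h * (f⁻¹ * a) ∈ B := fun h hh f hf a ha =>
    Finset.mem_union_right _ (Finset.mem_union_left _
      (Finset.mul_mem_mul hh (Finset.mul_mem_mul (Finset.inv_mem_inv hf) ha)))
  have hF₂B : ∀ h ∈ F₂, ∀ b ∈ B₀, h * b ∈ B := fun h hh b hb =>
    Finset.mem_union_right _ (Finset.mem_union_right _ (Finset.mul_mem_mul hh hb))
  clear_value B δ
  refine ⟨B, hAB₀.trans hB₀B, ?_⟩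
  intro V
  induction V using Finset.induction_on with
  | empty =>
    intro _ xv y _
    exact ⟨y, by simp, fun g _ => by rw [dist_self]; exact hε.le⟩
  | insert v W hvW ih =>
    intro hsep xv y hxy
    obtain ⟨z, hza, hzb⟩ := ih
      (fun v₁ h₁ v₂ h₂ => hsep v₁ (Finset.mem_insert_of_mem h₁) v₂ (Finset.mem_insert_of_mem h₂))
      xv y (fun v hv => hxy v (Finset.mem_insert_of_mem hv))
    have hvmem : v ∈ insert v W := Finset.mem_insert_self _ _
    have hzy : ∀ b ∈ B, dist ((b * v) • z) ((b * v) • y) ≤ ε := by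
      intro b hb
      apply hzb
      intro v' hv' b' hb' heq
      have := hsep v hvmem v' (Finset.mem_insert_of_mem hv') b hb b' hb' heq
      exact hvW (this ▸ hv')
    obtain ⟨u, hu1, hu2⟩ := hB₀ (v • xv v) (v • z) (by
      refine supD_le_of hδ₀.le ?_
      rintro b ⟨hb, hbA⟩
      have hb : b ∈ B₀ := hb
      have hbA : b ∉ A := hbA
      have e1 : dist ((b * v) • z) ((b * v) • y) ≤ δ₀ / 2 := by
        apply hF₂
        intro h hh
        rw [← mul_smul, ← mul_smul, ← mul_assoc]
        have := hzy (h * b) (hF₂B h hh b hb)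
        linarith
      have e2 := hxy v hvmem b (hB₀B hb) hbA
      rw [← mul_smul, ← mul_smul]
      have e3 := dist_triangle_right ((b * v) • xv v) ((b * v) • z) ((b * v) • y)
      linarith)
    have hu1 := le_of_supD hu1
    have hu2 := le_of_supD hu2
    set z' := v⁻¹ • u with hz'
    have hvz' : ∀ b : G, (b * v) • z' = b • u := by
      intro b; rw [hz', ← mul_smul, mul_inv_cancel_right]
    have hnear : ∀ g : G, (∀ a ∈ A, g ≠ a * v) → dist (g • z') (g • z) ≤ ε := by
      intro g hg
      have := hu2 (g * v⁻¹) ⟨Set.mem_univ _, fun hA => hg (g * v⁻¹) hA (by simp)⟩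
      rw [← mul_smul, inv_mul_cancel_right] at this
      rw [dist_comm, hz', ← mul_smul]
      exact this
    have ha' : ∀ w ∈ insert v W, ∀ b ∈ B, dist ((b * w) • z') ((b * w) • xv w) ≤ 3 * ε := by
      intro w hw b hb
      rcases Finset.mem_insert.1 hw with rfl | hwW
      · by_cases hbA : b ∈ A
        · have := hu1 b (hAB₀ hbA)
          rw [← mul_smul, ← hvz', dist_comm] at this
          linarith
        · have e1 := hnear (b * w) (fun a ha heq => hbA (by
            have := mul_right_cancel heq; exact this ▸ ha))
          have e2 := hzy b hb
          have e3 := hxy w hw b hb hbA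
          have e4 := dist_triangle4 ((b * w) • z') ((b * w) • z) ((b * w) • y) ((b * w) • xv w)
          rw [dist_comm ((b * w) • y)] at e4
          linarith
      · have e1 := hnear (b * w) (fun a ha heq => hvW (by
            have := hsep w hw v hvmem b hb a (hB₀B (hAB₀ ha)) heq
            exact this ▸ hwW))
        have e2 := hza w hwW b hb
        have e3 := dist_triangle ((b * w) • z') ((b * w) • z) ((b * w) • xv w)
        linarith
    have hb' : ∀ g : G, (∀ w ∈ insert v W, ∀ b ∈ B, g ≠ b * w) →
        dist (g • z') (g • y) ≤ 3 * ε := by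
      intro g hg
      have e1 := hnear g (fun a ha => hg v hvmem a (hB₀B (hAB₀ ha)))
      have e2 := hzb g (fun w hw => hg w (Finset.mem_insert_of_mem hw))
      have e3 := dist_triangle (g • z') (g • z) (g • y)
      linarith
    clear_value z'
    have himp : ∀ g : G,
        (∃ w ∈ insert v W, (∃ b ∈ B, g = b * w) ∧ dist (g • z') (g • xv w) ≤ ε / 2) ∨
        ((∀ w ∈ insert v W, ∀ a ∈ A, g ≠ a * w) ∧ dist (g • z') (g • y) ≤ ε / 2) := by
      intro g
      by_cases hex : ∃ w ∈ insert v W, ∃ f ∈ F₁, ∃ a ∈ A, f * g = a * w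
      · left
        obtain ⟨w, hw, f, hf, a, ha, heq⟩ := hex
        have hg : g = (f⁻¹ * a) * w := by rw [mul_assoc, ← heq, inv_mul_cancel_left]
        refine ⟨w, hw, ⟨f⁻¹ * a, ?_, hg⟩, ?_⟩
        · simpa using hF₁B 1 h1F₁ f hf a ha
        · apply hF₁
          intro h hh
          have := ha' w hw _ (hF₁B h hh f hf a ha)
          rw [mul_assoc, ← hg, mul_smul, mul_smul] at this
          linarith
      · right
        push Not at hex
        refine ⟨fun w hw a ha => by simpa using hex w hw 1 h1F₁ a ha, ?_⟩
        apply hF₁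
        intro h hh
        rw [← mul_smul, ← mul_smul]
        by_cases hBW : ∃ w ∈ insert v W, ∃ b ∈ B, h * g = b * w
        · obtain ⟨w, hw, b, hb, heq⟩ := hBW
          have hbA : b ∉ A := fun hbA => hex w hw h hh b hbA heq
          have e1 := ha' w hw b hb
          have e2 := hxy w hw b hb hbA
          have e3 := dist_triangle ((b * w) • z') ((b * w) • xv w) ((b * w) • y)
          rw [heq]
          linarith
        · push Not at hBW
          have := hb' (h * g) hBW
          linarith
    refine ⟨z', ?_, ?_⟩
    · intro w hw b hb
      rcases himp (b * w) with ⟨w', hw', ⟨b', hb', heq⟩, hd⟩ | ⟨hA, hd⟩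
      · have := hsep w hw w' hw' b hb b' hb' heq
        subst this
        linarith
      · have e2 := hxy w hw b hb (fun hbA => hA w hw b hbA rfl)
        have e3 := dist_triangle_right ((b * w) • z') ((b * w) • xv w) ((b * w) • y)
        linarith
    · intro g hg
      rcases himp g with ⟨w', hw', ⟨b', hb', heq⟩, hd⟩ | ⟨hA, hd⟩
      · exact absurd heq (hg w' hw' b' hb')
      · linarith

end Helpers

/-- Let `G ↷ X` be an expansive action with the TMP.  If `(x₁,…,x_k)` is an
orbit IE-tuple and `(x_k, y)` is an asymptotic pair, then `(x₁,…,x_k,y)` is an orbit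
IE-tuple. -/
theorem stmt10 (G X : Type*) [Group G] [Countable G] [Infinite G]
    [MetricSpace X] [CompactSpace X] [MulAction G X]
    (hcont : ∀ g : G, Continuous fun x : X => g • x)
    (hexp : Expansive G X) (htmp : TMP G X)
    (n : ℕ) (x : Fin (n + 1) → X) (y : X)
    (hIE : IETuple G x) (hasym : Asymptotic G (x (Fin.last n)) y) :
    IETuple G (Fin.snoc x y) := by
  classical
  intro U hUo hUx
  obtain ⟨c, hcpos, hc⟩ := hexp
  have hr : ∃ r > 0, ∀ i, Metric.ball ((Fin.snoc x y : Fin (n + 2) → X) i) r ⊆ U i := by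
    choose r hr hrU using fun i => Metric.isOpen_iff.1 (hUo i) _ (hUx i)
    obtain ⟨i₀, -, hi₀⟩ := Finset.exists_min_image Finset.univ r ⟨0, Finset.mem_univ _⟩
    exact ⟨r i₀, hr i₀, fun i => (Metric.ball_subset_ball (hi₀ i (Finset.mem_univ _))).trans (hrU i)⟩
  obtain ⟨r, hr, hrU⟩ := hr
  have hrx : ∀ i : Fin (n + 1), Metric.ball (x i) r ⊆ U i.castSucc := by
    intro i
    simpa using hrU i.castSucc
  have hry : Metric.ball y r ⊆ U (Fin.last (n + 1)) := by
    simpa using hrU (Fin.last (n + 1))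
  set ε := min (r / 2) (c / 4) with hεdef
  have hε : 0 < ε := lt_min (by linarith) (by linarith)
  have hεr : ε ≤ r / 2 := min_le_left _ _
  have hεc : ε ≤ c / 4 := min_le_right _ _
  obtain ⟨δ, hδ, hunif⟩ := uniform_tmp hcont hc htmp hε (by linarith)
  obtain ⟨A₀, hA₀⟩ := hasym (δ / 2) (half_pos hδ)
  obtain ⟨B, hAB, hBu⟩ := hunif (insert 1 A₀)
  have h1B : (1 : G) ∈ B := hAB (Finset.mem_insert_self _ _)
  obtain ⟨N, hN, hthin⟩ := thinning B h1B
  let U' : Fin (n + 1) → Set X := fun i =>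
    Metric.ball (x i) ε ∩ ⋂ g ∈ B, {w | dist (g • w) (g • x i) < δ / 2}
  obtain ⟨q, hq, hJ⟩ := hIE U'
    (fun i => Metric.isOpen_ball.inter (isOpen_biInter_finset fun g _ =>
      isOpen_lt ((hcont g).dist continuous_const) continuous_const))
    (fun i => ⟨Metric.mem_ball_self hε, by
      simp only [Set.mem_iInter, Set.mem_ofPred_eq, dist_self]
      intro _ _
      exact half_pos hδ⟩)
  have hNR : (0 : ℝ) < N := by exact_mod_cast hN
  refine ⟨q / N, div_pos hq hNR, fun F => ?_⟩
  obtain ⟨J, hJF, hJc, hJi⟩ := hJ F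
  obtain ⟨V, hVJ, hVc, hVsep⟩ := hthin J
  refine ⟨V, hVJ.trans hJF, ?_, ?_⟩
  · have : (J.card : ℝ) ≤ N * V.card := by exact_mod_cast hVc
    rw [div_mul_eq_mul_div, div_le_iff₀ hNR]
    linarith
  intro I hIV hIne φ
  have hIV : I ⊆ V := by exact_mod_cast hIV
  let ψ : G → Fin (n + 1) := fun g => Fin.lastCases (motive := fun _ => Fin (n + 1))
    (Fin.last n) (fun i => i) (φ g)
  have hψl : ∀ g, φ g = Fin.last (n + 1) → ψ g = Fin.last n := by
    intro g hg; simp [ψ, hg]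
  have hψc : ∀ g i, φ g = Fin.castSucc i → ψ g = i := by
    intro g i hg; simp [ψ, hg]
  obtain ⟨w, hw⟩ := hJi I (by exact_mod_cast hIV.trans hVJ) hIne ψ
  simp only [Set.mem_iInter, Set.mem_preimage] at hw
  obtain ⟨z, hza, hzb⟩ := hBu (I.filter fun s => φ s = Fin.last (n + 1))
    (fun v₁ h₁ v₂ h₂ => hVsep v₁ (hIV (Finset.mem_filter.1 h₁).1) v₂
      (hIV (Finset.mem_filter.1 h₂).1))
    (fun s => s⁻¹ • y) w (by
      intro s hs b hb hbA
      obtain ⟨hsI, hsφ⟩ := Finset.mem_filter.1 hs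
      have e1 := hA₀ b (fun h => hbA (Finset.mem_insert_of_mem h))
      have e2 := (hw s hsI).2
      rw [hψl s hsφ] at e2
      simp only [Set.mem_iInter, Set.mem_ofPred_eq] at e2
      have e2 := e2 b hb
      rw [← mul_smul, mul_inv_cancel_right, mul_smul]
      have e3 := dist_triangle_right (b • y) (b • s • w) (b • x (Fin.last n))
      rw [dist_comm (b • y) (b • x (Fin.last n))] at e3
      linarith)
  refine ⟨z, ?_⟩
  simp only [Set.mem_iInter, Set.mem_preimage]
  intro s hs
  by_cases hsφ : φ s = Fin.last (n + 1)
  · rw [hsφ]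
    apply hry
    have := hza s (Finset.mem_filter.2 ⟨hs, hsφ⟩) 1 h1B
    rw [one_mul, smul_inv_smul] at this
    rw [Metric.mem_ball]
    linarith
  · obtain ⟨i, hi⟩ := Fin.exists_castSucc_eq.2 hsφ
    rw [← hi]
    apply hrx
    have e1 := (hw s hs).1
    rw [hψc s i hi.symm, Metric.mem_ball] at e1
    have e2 := hzb s (by
      intro v hv b hb heq
      obtain ⟨hvI, hvφ⟩ := Finset.mem_filter.1 hv
      have := hVsep s (hIV hs) v (hIV hvI) 1 h1B b hb (by rw [one_mul]; exact heq)
      exact hsφ (this ▸ hvφ))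
    have e3 := dist_triangle (s • z) (s • w) (x i)
    rw [Metric.mem_ball]
    linarith
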